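/- arXiv:math/0502144 — 2 statements merged into one kernel-verified Lean document; each statement's English description precedes it below -/
import Mathlib

section
/- Let I be a homogeneous ideal in R = k[x_1,...,x_n,y] with Gröbner basis {y^{d_i} q_i + r_i} as above, and let I', C, P be as defined. Then the Hilbert series satisfy h_{R/I}(s) ≥ h_{R/P}(s) + s·h_{R/C}(s) coefficientwise, with equality if and only if I' = C ∩ P. -/
open MvPolynomial

noncomputable section

/-- The variable `y` (the last variable) in `R = k[x_1,…,x_n,y]`. -/
def yv (k : Type*) [Field k] (n : ℕ) : MvPolynomial (Fin (n + 1)) k :=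
  X (Fin.last n)

/-- The degree in `y` (the last variable). -/
def ydeg {k : Type*} [Field k] {n : ℕ} (p : MvPolynomial (Fin (n + 1)) k) : ℕ :=
  p.support.sup (fun m => m (Fin.last n))

/-- The initial `y`-form of `p`: the sum of all terms of `p` having the highest
power of `y`. -/
def iny {k : Type*} [Field k] {n : ℕ} (p : MvPolynomial (Fin (n + 1)) k) :
    MvPolynomial (Fin (n + 1)) k :=
  ∑ m ∈ p.support.filter (fun m => m (Fin.last n) = ydeg p), monomial m (p.coeff m)

/-- A term order on the monomials of a polynomial ring: a linear order on exponent
vectors compatible with addition and with `0` smallest. -/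
structure TermOrder (σ : Type*) where
  lo : LinearOrder (σ →₀ ℕ)
  add_le : ∀ a b c : σ →₀ ℕ, lo.le a b → lo.le (a + c) (b + c)
  zero_le : ∀ a : σ →₀ ℕ, lo.le 0 a

/-- The leading monomial of `p` (as an element of `WithBot`; `⊥` for `p = 0`). -/
def lm {k : Type*} [Field k] {σ : Type*} (ord : TermOrder σ)
    (p : MvPolynomial σ k) : WithBot (σ →₀ ℕ) :=
  letI := ord.lo
  p.support.max

/-- The leading term of `p` under the term order `ord`. -/
def leadTerm {k : Type*} [Field k] {σ : Type*} (ord : TermOrder σ)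
    (p : MvPolynomial σ k) : MvPolynomial σ k :=
  letI := ord.lo
  if h : p.support.Nonempty then
    monomial (p.support.max' h) (p.coeff (p.support.max' h))
  else 0

/-- The initial ideal of `J` under `ord`: generated by the leading terms of the
nonzero elements of `J`. -/
def initIdeal {k : Type*} [Field k] {σ : Type*} (ord : TermOrder σ)
    (J : Ideal (MvPolynomial σ k)) : Ideal (MvPolynomial σ k) :=
  Ideal.span { t | ∃ f ∈ J, f ≠ 0 ∧ t = leadTerm ord f }

/-- `g` is a Gröbner basis of `I` with respect to `ord`: the `g i` lie in `I`,
generate it, and the leading monomial of every nonzero element of `I` is divisible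
by the leading monomial of some `g i`. -/
def IsGB {k : Type*} [Field k] {σ : Type*} {ι : Type*} (ord : TermOrder σ)
    (I : Ideal (MvPolynomial σ k)) (g : ι → MvPolynomial σ k) : Prop :=
  (∀ i, g i ∈ I) ∧ I = Ideal.span (Set.range g) ∧
    ∀ f ∈ I, f ≠ 0 → ∃ (i : ι) (a b : σ →₀ ℕ),
      lm ord (g i) = (a : WithBot (σ →₀ ℕ)) ∧
      lm ord f = ((a + b : σ →₀ ℕ) : WithBot (σ →₀ ℕ))

/-- The `e`-th coefficient of the Hilbert series of `R/I` for the standard grading: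
the `k`-dimension of the image of the degree-`e` homogeneous component of `R`
in `R/I`. -/
def hilb {k : Type*} [Field k] {n : ℕ} (I : Ideal (MvPolynomial (Fin (n + 1)) k))
    (e : ℕ) : ℕ :=
  Module.finrank k
    (Submodule.map (Ideal.Quotient.mkₐ k I).toLinearMap
      (MvPolynomial.homogeneousSubmodule (Fin (n + 1)) k e))

/-!
Weighting the monomials by their degree in `y`, the ideal `I' = ⟨y ^ dᵢ qᵢ⟩` is the ideal of initial
forms of `I`, and it has the same Hilbert function: both are sums of the dimensions of the graded
pieces of `I` for the `y`-degree filtration. As the `qᵢ` do not involve `y`, the variable `y` is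
regular modulo `C = ⟨qᵢ⟩`, and `C` is the saturation of `I'` by `y`, so it is homogeneous. Moreover
`P = I' + ⟨y⟩`, so `I' ⊆ C ∩ P` and `C + P = C + ⟨y⟩`. Counting dimensions in
`0 → R/(C ∩ P) → R/C ⊕ R/P → R/(C + ⟨y⟩) → 0` and using that `R/(C + ⟨y⟩)` has Hilbert series
`(1 - s) h_{R/C}` gives `h_{R/(C ∩ P)} = h_{R/P} + s h_{R/C}`. Finally the homogeneous ideals
`I' ⊆ C ∩ P` coincide exactly when their Hilbert functions do.
-/

section LinearAlgebra

variable {k V W : Type*} [Field k] [AddCommGroup V] [Module k V] [AddCommGroup W] [Module k W]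

lemma finrank_map_add_finrank_inf_ker (T : V →ₗ[k] W) (U : Submodule k V) [FiniteDimensional k U] :
    Module.finrank k (U.map T) + Module.finrank k (U ⊓ LinearMap.ker T : Submodule k V) =
      Module.finrank k U := by
  have hker : (LinearMap.ker (T.domRestrict U)).map U.subtype = U ⊓ LinearMap.ker T := by
    rw [LinearMap.ker_domRestrict, Submodule.map_comap_subtype]
  rw [← (T.domRestrict U).finrank_range_add_finrank_ker, LinearMap.range_domRestrict, ← hker,
    Submodule.finrank_map_subtype_eq]

end LinearAlgebra

section WeightComponents

variable {R σ : Type*} [CommSemiring R] {w : σ → ℕ} {s t j : ℕ} {p q : MvPolynomial σ R}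

variable (R w j) in
/-- The polynomials all of whose monomials have weight less than `j`. The strict inequality makes
the filtration start at `0`. -/
def weightLT : Submodule R (MvPolynomial σ R) :=
  restrictSupport R {u | Finsupp.weight w u < j}

lemma mem_weightLT : p ∈ weightLT R w j ↔ ∀ u ∈ p.support, Finsupp.weight w u < j :=
  Iff.rfl

lemma mem_weightLT_succ_iff : p ∈ weightLT R w (j + 1) ↔ weightedTotalDegree w p ≤ j := by
  simp only [mem_weightLT, weightedTotalDegree, Finset.sup_le_iff, Order.lt_add_one_iff]

lemma weightLT_zero : weightLT R w 0 = ⊥ :=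
  (Submodule.eq_bot_iff _).mpr fun _ hp ↦ support_eq_empty.mp
    (Finset.eq_empty_of_forall_notMem fun u hu ↦ Nat.not_lt_zero _ (mem_weightLT.mp hp u hu))

lemma weightLT_mono (h : s ≤ t) : weightLT R w s ≤ weightLT R w t :=
  restrictSupport_mono _ fun _ hu ↦ lt_of_lt_of_le hu h

lemma mem_weightLT_succ_of_isWeightedHomogeneous (hp : p.IsWeightedHomogeneous w j) :
    p ∈ weightLT R w (j + 1) := fun u hu ↦ by
  simp [hp (mem_support_iff.mp hu)]

lemma mul_mem_weightLT (hp : p ∈ weightLT R w s) (hq : q ∈ weightLT R w (t + 1)) :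
    p * q ∈ weightLT R w (s + t) := by
  classical
  intro u hu
  obtain ⟨a, ha, b, hb, rfl⟩ := Finset.mem_add.mp (support_mul p q hu)
  have ha' : Finsupp.weight w a < s := hp ha
  have hb' : Finsupp.weight w b < t + 1 := hq hb
  rw [Set.mem_ofPred_eq, map_add]
  omega

lemma weightedHomogeneousComponent_comm (w₁ w₂ : σ → ℕ) (i j : ℕ) (p : MvPolynomial σ R) :
    weightedHomogeneousComponent w₁ i (weightedHomogeneousComponent w₂ j p) =
      weightedHomogeneousComponent w₂ j (weightedHomogeneousComponent w₁ i p) := by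
  classical
  ext u
  simp only [coeff_weightedHomogeneousComponent]
  split_ifs <;> rfl

lemma weightedHomogeneousComponent_mem_weightLT (w' : σ → ℕ) (i : ℕ) (hp : p ∈ weightLT R w j) :
    weightedHomogeneousComponent w' i p ∈ weightLT R w j := by
  classical
  refine mem_weightLT.mpr fun u hu ↦ mem_weightLT.mp hp u ?_
  rw [mem_support_iff, coeff_weightedHomogeneousComponent] at hu
  exact mem_support_iff.mpr fun hpu ↦ hu (by rw [hpu, ite_self])

lemma weightLT_succ_inf_ker :
    weightLT R w (j + 1) ⊓ LinearMap.ker (weightedHomogeneousComponent w j) = weightLT R w j := by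
  classical
  refine le_antisymm (fun p ⟨hp, hker⟩ ↦ mem_weightLT.mpr fun u hu ↦ ?_)
    (le_inf (weightLT_mono j.le_succ) fun p hp ↦
      weightedHomogeneousComponent_eq_zero' _ _ fun u hu ↦ (mem_weightLT.mp hp u hu).ne)
  refine lt_of_le_of_ne (Nat.lt_succ_iff.mp (mem_weightLT.mp hp u hu)) fun huj ↦
    mem_support_iff.mp hu ?_
  simpa [coeff_weightedHomogeneousComponent, huj] using
    congrArg (coeff u) (LinearMap.mem_ker.mp hker)

attribute [local instance] weightedGradedAlgebra in
lemma weightedHomogeneousComponent_mul (hp : p.IsWeightedHomogeneous w s) (t : ℕ)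
    (q : MvPolynomial σ R) :
    weightedHomogeneousComponent w (s + t) (p * q) = p * weightedHomogeneousComponent w t q := by
  rw [← weightedDecomposition.decompose'_apply, ← weightedDecomposition.decompose'_apply]
  exact DirectSum.coe_decompose_mul_add_of_left_mem (weightedHomogeneousSubmodule R w) hp

end WeightComponents

section HomogeneousIdeals

variable {R σ : Type*} [CommSemiring R] {I : Ideal (MvPolynomial σ R)}

lemma homogeneousComponent_mul {s : ℕ} {p : MvPolynomial σ R} (hp : p.IsHomogeneous s) (t : ℕ)
    (q : MvPolynomial σ R) : homogeneousComponent (s + t) (p * q) = p * homogeneousComponent t q :=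
  weightedHomogeneousComponent_mul hp t q

attribute [local instance] gradedAlgebra in
lemma isHomogeneous_iff_forall_homogeneousComponent_mem :
    I.IsHomogeneous (homogeneousSubmodule σ R) ↔ ∀ f ∈ I, ∀ e, homogeneousComponent e f ∈ I := by
  refine ⟨fun hI f hf ↦ homogeneousComponent_mem_of_mem hI hf, fun hI e f hf ↦ ?_⟩
  rw [← DirectSum.Decomposition.decompose'_eq, decomposition.decompose'_apply]
  exact hI f hf e

attribute [local instance] gradedAlgebra in
lemma isHomogeneous_span_singleton {e : ℕ} {f : MvPolynomial σ R} (hf : f.IsHomogeneous e) :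
    (Ideal.span {f}).IsHomogeneous (homogeneousSubmodule σ R) :=
  Ideal.homogeneous_span _ _ fun _ hg ↦ ⟨e, hg ▸ hf⟩

end HomogeneousIdeals

section InitialForms

variable {R σ : Type*} [CommSemiring R] {w : σ → ℕ} {I : Ideal (MvPolynomial σ R)}
  {f : MvPolynomial σ R} {j : ℕ}

variable (w) in
/-- The initial form of `p` for the weight `w`: the sum of the terms of `p` of highest weight. For
the weight of a single variable `y` this is the initial `y`-form. -/
def initialForm (p : MvPolynomial σ R) : MvPolynomial σ R :=
  weightedHomogeneousComponent w (weightedTotalDegree w p) p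

lemma isWeightedHomogeneous_initialForm (p : MvPolynomial σ R) :
    (initialForm w p).IsWeightedHomogeneous w (weightedTotalDegree w p) :=
  weightedHomogeneousComponent_isWeightedHomogeneous _ _

lemma initialForm_ne_zero {p : MvPolynomial σ R} (hp : p ≠ 0) : initialForm w p ≠ 0 := by
  classical
  obtain ⟨u, hu, hsup⟩ := Finset.exists_mem_eq_sup p.support (support_nonempty.mpr hp)
    (Finsupp.weight w)
  refine ne_zero_iff.mpr ⟨u, ?_⟩
  rw [initialForm, coeff_weightedHomogeneousComponent, weightedTotalDegree, if_pos hsup.symm]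
  exact mem_support_iff.mp hu

variable (w I) in
/-- The ideal `in_w(I)` generated by the initial forms of all the elements of `I`. -/
def initialFormIdeal : Ideal (MvPolynomial σ R) :=
  Ideal.span (initialForm w '' I)

variable (w I j) in
/-- The initial forms of weight `j` of the elements of `I`, together with `0`. -/
def initialFormsOfWeight : Submodule R (MvPolynomial σ R) :=
  (I.restrictScalars R ⊓ weightLT R w (j + 1)).map (weightedHomogeneousComponent w j)

lemma initialFormsOfWeight_le_initialFormIdeal :
    initialFormsOfWeight w I j ≤ (initialFormIdeal w I).restrictScalars R := by
  rintro _ ⟨F, ⟨hFI, hFj⟩, rfl⟩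
  rcases (mem_weightLT_succ_iff.mp hFj).eq_or_lt with rfl | hlt
  · exact Ideal.subset_span ⟨F, hFI, rfl⟩
  · rw [weightedHomogeneousComponent_eq_zero _ _ hlt]
    exact zero_mem _

lemma weightedHomogeneousComponent_monomial_mul_mem_initialFormsOfWeight
    (hf : ∀ t, weightedHomogeneousComponent w t f ∈ initialFormsOfWeight w I t)
    (u : σ →₀ ℕ) (c : R) (j : ℕ) :
    weightedHomogeneousComponent w j (monomial u c * f) ∈ initialFormsOfWeight w I j := by
  classical
  have hu : (monomial u c).IsWeightedHomogeneous w (Finsupp.weight w u) :=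
    isWeightedHomogeneous_monomial w u c rfl
  rcases le_or_gt (Finsupp.weight w u) j with huj | huj
  · obtain ⟨t, rfl⟩ := Nat.exists_eq_add_of_le huj
    obtain ⟨F, ⟨hFI, hFt⟩, hF⟩ := hf t
    refine ⟨monomial u c * F, ⟨I.mul_mem_left _ hFI, add_right_comm _ 1 t ▸
      mul_mem_weightLT (mem_weightLT_succ_of_isWeightedHomogeneous hu) hFt⟩, ?_⟩
    rw [weightedHomogeneousComponent_mul hu, weightedHomogeneousComponent_mul hu, hF]
  · rw [weightedHomogeneousComponent_eq_zero']
    · exact zero_mem _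
    · intro v hv
      obtain ⟨a, ha, b, -, rfl⟩ := Finset.mem_add.mp (support_mul _ _ hv)
      obtain rfl := Finset.mem_singleton.mp (support_monomial_subset ha)
      rw [map_add]
      omega

lemma weightedHomogeneousComponent_mem_initialFormsOfWeight (hf : f ∈ initialFormIdeal w I)
    (j : ℕ) : weightedHomogeneousComponent w j f ∈ initialFormsOfWeight w I j := by
  classical
  revert j
  induction hf using Submodule.span_induction with
  | mem _ hmem =>
    obtain ⟨g, hg, rfl⟩ := hmem
    intro j
    rw [weightedHomogeneousComponent_of_mem (isWeightedHomogeneous_initialForm g)]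
    split_ifs with hj
    · exact ⟨g, ⟨hg, mem_weightLT_succ_iff.mpr hj.ge⟩, by rw [hj, initialForm]⟩
    · exact zero_mem _
  | zero => exact fun j ↦ by simp only [map_zero, zero_mem]
  | add a b _ _ ha hb =>
    intro j
    rw [map_add]
    exact add_mem (ha j) (hb j)
  | smul a b _ hb =>
    rw [smul_eq_mul]
    induction a using MvPolynomial.induction_on' with
    | monomial u c =>
      exact weightedHomogeneousComponent_monomial_mul_mem_initialFormsOfWeight hb u c
    | add a₁ a₂ ha₁ ha₂ =>
      intro j
      rw [add_mul, map_add]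
      exact add_mem (ha₁ j) (ha₂ j)

attribute [local instance] weightedGradedAlgebra in
lemma mem_initialFormIdeal_iff_weightedHomogeneousComponent_mem :
    f ∈ initialFormIdeal w I ↔ ∀ j, weightedHomogeneousComponent w j f ∈ initialFormIdeal w I := by
  refine mem_iff_weightedHomogeneousComponent_mem R w (Ideal.homogeneous_span _ _ ?_) f
  rintro _ ⟨g, -, rfl⟩
  exact ⟨_, isWeightedHomogeneous_initialForm g⟩

attribute [local instance] gradedAlgebra in
lemma homogeneousComponent_mem_initialFormsOfWeight
    (hI : I.IsHomogeneous (homogeneousSubmodule σ R)) (hf : f ∈ initialFormsOfWeight w I j)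
    (e : ℕ) : homogeneousComponent e f ∈ initialFormsOfWeight w I j := by
  obtain ⟨F, ⟨hFI, hFj⟩, rfl⟩ := hf
  refine ⟨homogeneousComponent e F, ⟨homogeneousComponent_mem_of_mem hI hFI e,
    weightedHomogeneousComponent_mem_weightLT _ e hFj⟩, ?_⟩
  exact weightedHomogeneousComponent_comm _ _ _ _ _

attribute [local instance] gradedAlgebra in
lemma isHomogeneous_initialFormIdeal (hI : I.IsHomogeneous (homogeneousSubmodule σ R)) :
    (initialFormIdeal w I).IsHomogeneous (homogeneousSubmodule σ R) := by
  refine isHomogeneous_iff_forall_homogeneousComponent_mem.mpr fun f hf e ↦ ?_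
  refine mem_initialFormIdeal_iff_weightedHomogeneousComponent_mem.mpr fun j ↦ ?_
  rw [homogeneousComponent, weightedHomogeneousComponent_comm]
  exact initialFormsOfWeight_le_initialFormIdeal (homogeneousComponent_mem_initialFormsOfWeight hI
    (weightedHomogeneousComponent_mem_initialFormsOfWeight hf j) e)

end InitialForms

section DegreeParts

variable {k σ : Type*} [Field k] {I J : Ideal (MvPolynomial σ k)} {e : ℕ}

variable (I e) in
/-- The degree-`e` part of the ideal `I`, as a vector space. -/
def degreePart : Submodule k (MvPolynomial σ k) :=
  I.restrictScalars k ⊓ homogeneousSubmodule σ k e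

instance [Finite σ] : FiniteDimensional k (homogeneousSubmodule σ k e) :=
  (Submodule.fg_iff_finiteDimensional _).mp (homogeneousSubmodule_fg σ k e)

instance [Finite σ] : FiniteDimensional k (degreePart I e) :=
  Submodule.finiteDimensional_inf_right _ _

lemma degreePart_mono (hIJ : I ≤ J) : degreePart I e ≤ degreePart J e :=
  fun _ hf ↦ ⟨hIJ hf.1, hf.2⟩

lemma degreePart_inf : degreePart (I ⊓ J) e = degreePart I e ⊓ degreePart J e :=
  inf_inf_distrib_right (I.restrictScalars k) (J.restrictScalars k) (homogeneousSubmodule σ k e)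

attribute [local instance] gradedAlgebra in
lemma degreePart_sup (hI : I.IsHomogeneous (homogeneousSubmodule σ k))
    (hJ : J.IsHomogeneous (homogeneousSubmodule σ k)) :
    degreePart (I ⊔ J) e = degreePart I e ⊔ degreePart J e := by
  refine le_antisymm ?_ (sup_le (degreePart_mono le_sup_left) (degreePart_mono le_sup_right))
  rintro f ⟨hf, hfe⟩
  obtain ⟨a, ha, b, hb, rfl⟩ := Submodule.mem_sup.mp hf
  have hcomp : homogeneousComponent e a + homogeneousComponent e b = a + b := by
    rw [← map_add, homogeneousComponent_of_mem hfe, if_pos rfl]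
  rw [← hcomp]
  exact Submodule.add_mem_sup
    ⟨homogeneousComponent_mem_of_mem hI ha e, homogeneousComponent_mem e a⟩
    ⟨homogeneousComponent_mem_of_mem hJ hb e, homogeneousComponent_mem e b⟩

end DegreeParts

section InitialFormIdealDimension

variable {k σ : Type*} [Field k] {w : σ → ℕ} {I : Ideal (MvPolynomial σ k)} {e : ℕ}

lemma exists_le_weightLT {A : Submodule k (MvPolynomial σ k)} (hA : A.FG) :
    ∃ j, A ≤ weightLT k w j := by
  obtain ⟨S, rfl⟩ := hA
  refine ⟨S.sup (weightedTotalDegree w) + 1, Submodule.span_le.mpr fun p hp ↦ ?_⟩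
  exact mem_weightLT_succ_iff.mpr (Finset.le_sup hp)

-- Both sides are `∑ j, dim gr_j` for the weight filtration.
lemma finrank_eq_of_map_weightedHomogeneousComponent_eq {A B : Submodule k (MvPolynomial σ k)}
    [FiniteDimensional k A] [FiniteDimensional k B]
    (hgr : ∀ j, (A ⊓ weightLT k w (j + 1)).map (weightedHomogeneousComponent w j) =
      (B ⊓ weightLT k w (j + 1)).map (weightedHomogeneousComponent w j)) :
    Module.finrank k A = Module.finrank k B := by
  have hstep (U : Submodule k (MvPolynomial σ k)) [FiniteDimensional k U] (j : ℕ) :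
      Module.finrank k ((U ⊓ weightLT k w (j + 1)).map (weightedHomogeneousComponent w j)) +
        Module.finrank k (U ⊓ weightLT k w j : Submodule k (MvPolynomial σ k)) =
      Module.finrank k (U ⊓ weightLT k w (j + 1) : Submodule k (MvPolynomial σ k)) := by
    rw [← finrank_map_add_finrank_inf_ker (weightedHomogeneousComponent w j)
      (U ⊓ weightLT k w (j + 1)), inf_assoc, weightLT_succ_inf_ker]
  have hall (j : ℕ) : Module.finrank k (A ⊓ weightLT k w j : Submodule k (MvPolynomial σ k)) =
      Module.finrank k (B ⊓ weightLT k w j : Submodule k (MvPolynomial σ k)) := by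
    induction j with
    | zero => rw [weightLT_zero, inf_bot_eq, inf_bot_eq]
    | succ j ih => rw [← hstep A, ← hstep B, hgr, ih]
  obtain ⟨j, hj⟩ := exists_le_weightLT (w := w)
    ((Submodule.fg_iff_finiteDimensional (A ⊔ B)).mpr inferInstance)
  have hjAB := hall j
  rwa [inf_eq_left.mpr (le_sup_left.trans hj), inf_eq_left.mpr (le_sup_right.trans hj)] at hjAB

attribute [local instance] gradedAlgebra

lemma map_degreePart_inf_weightLT (hI : I.IsHomogeneous (homogeneousSubmodule σ k)) (j : ℕ) :
    (degreePart I e ⊓ weightLT k w (j + 1)).map (weightedHomogeneousComponent w j) =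
      initialFormsOfWeight w I j ⊓ homogeneousSubmodule σ k e := by
  refine le_antisymm ?_ ?_
  · rintro _ ⟨F, ⟨⟨hFI, hFe⟩, hFj⟩, rfl⟩
    refine ⟨⟨F, ⟨hFI, hFj⟩, rfl⟩, ?_⟩
    have hFe' : homogeneousComponent e F = F := by rw [homogeneousComponent_of_mem hFe, if_pos rfl]
    rw [← hFe', homogeneousComponent, weightedHomogeneousComponent_comm]
    exact homogeneousComponent_mem e _
  · rintro _ ⟨⟨F, ⟨hFI, hFj⟩, rfl⟩, hFe⟩
    refine ⟨homogeneousComponent e F, ⟨⟨homogeneousComponent_mem_of_mem hI hFI e,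
      homogeneousComponent_mem e F⟩, weightedHomogeneousComponent_mem_weightLT _ e hFj⟩, ?_⟩
    rw [homogeneousComponent, weightedHomogeneousComponent_comm]
    exact (homogeneousComponent_of_mem hFe).trans (if_pos rfl)

lemma initialFormsOfWeight_initialFormIdeal (j : ℕ) :
    initialFormsOfWeight w (initialFormIdeal w I) j = initialFormsOfWeight w I j := by
  refine le_antisymm ?_ fun f hf ↦ ?_
  · rintro _ ⟨F, ⟨hF, -⟩, rfl⟩
    exact weightedHomogeneousComponent_mem_initialFormsOfWeight hF j
  · have hfw : f.IsWeightedHomogeneous w j := by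
      obtain ⟨F, -, rfl⟩ := hf
      exact weightedHomogeneousComponent_isWeightedHomogeneous _ _
    exact ⟨f, ⟨initialFormsOfWeight_le_initialFormIdeal hf,
      mem_weightLT_succ_of_isWeightedHomogeneous hfw⟩, hfw.weightedHomogeneousComponent_same⟩

lemma finrank_degreePart_initialFormIdeal [Finite σ]
    (hI : I.IsHomogeneous (homogeneousSubmodule σ k)) :
    Module.finrank k (degreePart (initialFormIdeal w I) e) = Module.finrank k (degreePart I e) :=
  finrank_eq_of_map_weightedHomogeneousComponent_eq (w := w) fun j ↦ by
    rw [map_degreePart_inf_weightLT hI, map_degreePart_inf_weightLT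
      (isHomogeneous_initialFormIdeal hI), initialFormsOfWeight_initialFormIdeal]

end InitialFormIdealDimension

section InitialFormMul

variable {R σ : Type*} [CommRing R] {w : σ → ℕ} {p q : MvPolynomial σ R} {s t : ℕ}

lemma weightedHomogeneousComponent_mul_of_mem_weightLT (hp : p ∈ weightLT R w (s + 1))
    (hq : q ∈ weightLT R w (t + 1)) :
    weightedHomogeneousComponent w (s + t) (p * q) =
      weightedHomogeneousComponent w s p * weightedHomogeneousComponent w t q := by
  set p' := weightedHomogeneousComponent w s p
  have hp' : p'.IsWeightedHomogeneous w s := weightedHomogeneousComponent_isWeightedHomogeneous _ _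
  have hlow : p - p' ∈ weightLT R w s := by
    rw [← weightLT_succ_inf_ker]
    refine ⟨sub_mem hp (mem_weightLT_succ_of_isWeightedHomogeneous hp'),
      LinearMap.mem_ker.mpr ?_⟩
    rw [map_sub, hp'.weightedHomogeneousComponent_same, sub_self]
  have hzero : weightedHomogeneousComponent w (s + t) ((p - p') * q) = 0 := by
    have hmem := mul_mem_weightLT hlow hq
    rw [← weightLT_succ_inf_ker] at hmem
    exact hmem.2
  rw [← weightedHomogeneousComponent_mul hp', ← sub_eq_zero, ← map_sub, ← sub_mul, hzero]

lemma initialForm_mul [NoZeroDivisors R] (p q : MvPolynomial σ R) :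
    initialForm w (p * q) = initialForm w p * initialForm w q := by
  rcases eq_or_ne p 0 with rfl | hp
  · rw [zero_mul, initialForm, map_zero, zero_mul]
  rcases eq_or_ne q 0 with rfl | hq
  · rw [mul_zero, initialForm, map_zero, mul_zero]
  have hp' := mem_weightLT_succ_iff.mpr (le_refl (weightedTotalDegree w p))
  have hq' := mem_weightLT_succ_iff.mpr (le_refl (weightedTotalDegree w q))
  have hmul := weightedHomogeneousComponent_mul_of_mem_weightLT hp' hq'
  have hle : weightedTotalDegree w (p * q) ≤ weightedTotalDegree w p + weightedTotalDegree w q :=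
    mem_weightLT_succ_iff.mp (add_right_comm _ _ 1 ▸ mul_mem_weightLT hp' hq')
  have hge : weightedTotalDegree w p + weightedTotalDegree w q ≤ weightedTotalDegree w (p * q) := by
    by_contra! hlt
    rw [weightedHomogeneousComponent_eq_zero _ _ hlt] at hmul
    exact mul_ne_zero (initialForm_ne_zero hp) (initialForm_ne_zero hq) hmul.symm
  rw [initialForm, hle.antisymm hge, hmul, initialForm, initialForm]

end InitialFormMul

section GroebnerBasis

open MonomialOrder

variable {k σ ι : Type*} [Field k] {w : σ → ℕ} {m : MonomialOrder σ}
  {p q : MvPolynomial σ k} {I : Ideal (MvPolynomial σ k)} {g : ι → MvPolynomial σ k}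

lemma weight_degree_eq_weightedTotalDegree
    (hm : ∀ u v, u ≼[m] v → Finsupp.weight w u ≤ Finsupp.weight w v) (p : MvPolynomial σ k) :
    Finsupp.weight w (m.degree p) = weightedTotalDegree w p := by
  rcases eq_or_ne p 0 with rfl | hp
  · rw [m.degree_zero, map_zero, weightedTotalDegree_zero, Nat.bot_eq_zero]
  · exact (le_weightedTotalDegree w (m.degree_mem_support hp)).antisymm
      (Finset.sup_le fun u hu ↦ hm _ _ (m.le_degree hu))

lemma weightedHomogeneousComponent_mem_span_initialForm {j : ℕ}
    (h : weightedTotalDegree w (q * p) ≤ j) :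
    weightedHomogeneousComponent w j (q * p) ∈ Ideal.span {initialForm w q} := by
  rcases h.eq_or_lt with rfl | hlt
  · exact Ideal.mem_span_singleton.mpr ⟨initialForm w p, initialForm_mul q p⟩
  · rw [weightedHomogeneousComponent_eq_zero _ _ hlt]
    exact zero_mem _

lemma exists_linearCombination_eq_of_forall_degree_le (hg₀ : ∀ i, g i ≠ 0) (hg : ∀ i, g i ∈ I)
    (hdvd : ∀ f ∈ I, f ≠ 0 → ∃ i, m.degree (g i) ≤ m.degree f)
    {f : MvPolynomial σ k} (hf : f ∈ I) :
    ∃ a : ι →₀ MvPolynomial σ k, f = Finsupp.linearCombination _ g a ∧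
      ∀ i, m.degree (g i * a i) ≼[m] m.degree f := by
  obtain ⟨a, r, hfar, ha, hr⟩ := m.div (fun i ↦ m.isUnit_leadingCoeff.mpr (hg₀ i)) f
  have hgI : Submodule.span (MvPolynomial σ k) (Set.range g) ≤ I :=
    Submodule.span_le.mpr (Set.range_subset_iff.mpr hg)
  have hrI : r ∈ I := by
    rw [← sub_eq_of_eq_add' hfar]
    exact sub_mem hf (hgI (Finsupp.mem_span_range_iff_exists_finsupp.mpr ⟨a, rfl⟩))
  have hr₀ : r = 0 := by
    by_contra hr₀
    obtain ⟨i, hi⟩ := hdvd r hrI hr₀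
    exact hr _ (m.degree_mem_support hr₀) i hi
  exact ⟨a, by rw [hfar, hr₀, add_zero], ha⟩

lemma initialFormIdeal_eq_span_range_of_forall_degree_le
    (hm : ∀ u v, u ≼[m] v → Finsupp.weight w u ≤ Finsupp.weight w v)
    (hg₀ : ∀ i, g i ≠ 0) (hg : ∀ i, g i ∈ I)
    (hdvd : ∀ f ∈ I, f ≠ 0 → ∃ i, m.degree (g i) ≤ m.degree f) :
    initialFormIdeal w I = Ideal.span (Set.range fun i ↦ initialForm w (g i)) := by
  refine le_antisymm (Ideal.span_le.mpr ?_) (Ideal.span_mono ?_)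
  · rintro _ ⟨f, hf, rfl⟩
    obtain ⟨a, hfa, ha⟩ := exists_linearCombination_eq_of_forall_degree_le hg₀ hg hdvd hf
    have hdeg (i : ι) : weightedTotalDegree w (g i * a i) ≤ weightedTotalDegree w f := by
      rw [← weight_degree_eq_weightedTotalDegree hm, ← weight_degree_eq_weightedTotalDegree hm]
      exact hm _ _ (ha i)
    have hsum : f = ∑ i ∈ a.support, g i * a i := by
      rw [hfa, Finsupp.linearCombination_apply, Finsupp.sum]
      exact Finset.sum_congr rfl fun i _ ↦ mul_comm _ _
    rw [SetLike.mem_coe, initialForm]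
    generalize weightedTotalDegree w f = j at hdeg
    rw [hsum, map_sum]
    exact sum_mem fun i _ ↦ Ideal.span_mono (Set.singleton_subset_iff.mpr (Set.mem_range_self i))
      (weightedHomogeneousComponent_mem_span_initialForm (hdeg i))
  · rintro _ ⟨i, rfl⟩
    exact ⟨g i, hg i, rfl⟩

end GroebnerBasis

section TermOrder

open MonomialOrder

variable {k σ : Type*} [Field k] {w : σ → ℕ}

namespace TermOrder

lemma le_of_le (ord : TermOrder σ) {u v : σ →₀ ℕ} (huv : u ≤ v) : ord.lo.le u v := by
  obtain ⟨c, rfl⟩ := exists_add_of_le huv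
  simpa only [zero_add, add_comm c] using ord.add_le 0 c u (ord.zero_le c)

/-- The exponent vectors, ordered by `ord` instead of the pointwise order. -/
def Syn (_ : TermOrder σ) : Type _ := σ →₀ ℕ

instance (ord : TermOrder σ) : AddCommMonoid ord.Syn := inferInstanceAs (AddCommMonoid (σ →₀ ℕ))

instance (ord : TermOrder σ) : LinearOrder ord.Syn := ord.lo

instance (ord : TermOrder σ) : IsOrderedAddMonoid ord.Syn where
  add_le_add_left a b h c := ord.add_le a b c h

-- Dickson's lemma.
instance [Finite σ] (ord : TermOrder σ) : WellFoundedLT ord.Syn := by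
  refine ⟨RelEmbedding.wellFounded_iff_isEmpty.mpr ⟨fun f ↦ ?_⟩⟩
  obtain ⟨i, j, hij, hle⟩ := wellQuasiOrdered_le (α := σ →₀ ℕ) f
  exact (f.map_rel_iff.mpr hij).not_ge (ord.le_of_le hle)

/-- A term order as one of Mathlib's monomial orders. -/
def toMonomialOrder [Finite σ] (ord : TermOrder σ) : MonomialOrder σ where
  syn := ord.Syn
  toSyn := AddEquiv.refl _
  toSyn_monotone := fun _ _ ↦ ord.le_of_le

end TermOrder

lemma lm_eq_coe_degree [Finite σ] (ord : TermOrder σ) {p : MvPolynomial σ k} (hp : p ≠ 0) :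
    lm ord p = ord.toMonomialOrder.degree p :=
  le_antisymm (α := WithBot ord.Syn)
    (Finset.max_le (α := ord.Syn) fun _ hu ↦
      WithBot.coe_le_coe.mpr (ord.toMonomialOrder.le_degree hu))
    (Finset.le_max (α := ord.Syn) (ord.toMonomialOrder.degree_mem_support hp))

lemma weight_le_weight_of_lm_eq_lm_initialForm [Finite σ] (ord : TermOrder σ)
    (hord : ∀ p : MvPolynomial σ k, lm ord p = lm ord (initialForm w p)) {u v : σ →₀ ℕ}
    (huv : u ≼[ord.toMonomialOrder] v) : Finsupp.weight w u ≤ Finsupp.weight w v := by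
  classical
  set m := ord.toMonomialOrder
  rcases eq_or_ne u v with rfl | hne
  · exact le_rfl
  set p : MvPolynomial σ k := monomial u 1 + monomial v 1
  have hu : u ∈ p.support := by simp [p, coeff_monomial, hne.symm]
  have hv : v ∈ p.support := by simp [p, coeff_monomial, hne]
  have hp : p ≠ 0 := support_nonempty.mp ⟨u, hu⟩
  have hdeg : m.degree p = v := by
    refine m.toSyn.injective (le_antisymm ?_ (m.le_degree hv))
    refine m.degree_le_iff.mpr fun b hb ↦ ?_
    rcases Finset.mem_union.mp (support_add hb) with hb | hb <;>
      obtain rfl := Finset.mem_singleton.mp (support_monomial_subset hb)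
    · exact huv
    · exact le_rfl
  have hinit : m.degree (initialForm w p) = v := by
    have hlm := hord p
    rwa [lm_eq_coe_degree ord hp, lm_eq_coe_degree ord (initialForm_ne_zero hp), WithBot.coe_inj,
      hdeg, eq_comm] at hlm
  have hmem : v ∈ (initialForm w p).support := hinit ▸ m.degree_mem_support (initialForm_ne_zero hp)
  calc Finsupp.weight w u ≤ weightedTotalDegree w p := le_weightedTotalDegree w hu
    _ = Finsupp.weight w v :=
      (isWeightedHomogeneous_initialForm p (mem_support_iff.mp hmem)).symm

lemma IsGB.initialFormIdeal_eq_span_range [Finite σ] {ι : Type*} {ord : TermOrder σ}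
    {I : Ideal (MvPolynomial σ k)} {g : ι → MvPolynomial σ k} (hGB : IsGB ord I g)
    (hord : ∀ p : MvPolynomial σ k, lm ord p = lm ord (initialForm w p)) (hg₀ : ∀ i, g i ≠ 0) :
    initialFormIdeal w I = Ideal.span (Set.range fun i ↦ initialForm w (g i)) := by
  obtain ⟨hg, -, hdvd⟩ := hGB
  refine initialFormIdeal_eq_span_range_of_forall_degree_le (m := ord.toMonomialOrder)
    (fun _ _ ↦ weight_le_weight_of_lm_eq_lm_initialForm ord hord) hg₀ hg fun f hf hf₀ ↦ ?_
  obtain ⟨i, a, b, ha, hab⟩ := hdvd f hf hf₀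
  rw [lm_eq_coe_degree ord (hg₀ i), WithBot.coe_inj] at ha
  rw [lm_eq_coe_degree ord hf₀, WithBot.coe_inj] at hab
  exact ⟨i, by rw [ha, hab]; exact le_self_add⟩

end TermOrder

section VariableFree

variable {R σ : Type*} [CommSemiring R] {i : σ} {f q : MvPolynomial σ R}

lemma exists_mem_support_eq_zero_of_not_X_dvd (hq : ¬ X i ∣ q) : ∃ u ∈ q.support, u i = 0 := by
  by_contra! h
  refine hq (X_dvd_iff_modMonomial_eq_zero.mpr (ext _ _ fun u ↦ ?_))
  rw [coeff_zero]
  by_cases hu : Finsupp.single i 1 ≤ u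
  · exact coeff_modMonomial_of_le _ hu
  · rw [coeff_modMonomial_of_not_le _ hu, ← notMem_support_iff]
    rw [Finsupp.single_le_iff, Nat.one_le_iff_ne_zero] at hu
    exact fun hmem ↦ hu (h u hmem)

lemma degreeOf_eq_zero_of_isWeightedHomogeneous_X_pow_mul [DecidableEq σ] {d j : ℕ}
    (hhom : (X i ^ d * q).IsWeightedHomogeneous (Pi.single i 1 : σ → ℕ) j) (hq : ¬ X i ∣ q) :
    q.degreeOf i = 0 := by
  have hdeg : ∀ u ∈ q.support, d + u i = j := fun u hu ↦ by
    have hcoeff : coeff (Finsupp.single i d + u) (X i ^ d * q) ≠ 0 := by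
      rw [X_pow_eq_monomial, coeff_monomial_mul, one_mul]
      exact mem_support_iff.mp hu
    simpa only [Finsupp.weight_single_one_apply, Finsupp.add_apply, Finsupp.single_eq_same] using
      hhom hcoeff
  obtain ⟨u, hu, hui⟩ := exists_mem_support_eq_zero_of_not_X_dvd hq
  refine Nat.le_zero.mp (degreeOf_le_iff.mpr fun v hv ↦ ?_)
  have hu' := hdeg u hu
  have hv' := hdeg v hv
  omega

variable [IsLeftCancelAdd R]

lemma mul_divMonomial_single_of_degreeOf_eq_zero (hq : q.degreeOf i = 0) (f : MvPolynomial σ R) :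
    (f * q).divMonomial (Finsupp.single i 1) = f.divMonomial (Finsupp.single i 1) * q := by
  classical
  refine (eq_divMonomial_single (r := f.modMonomial (Finsupp.single i 1) * q) ?_
    fun u hu ↦ ?_).symm
  · rw [← mul_assoc, ← add_mul, divMonomial_add_modMonomial_single]
  · obtain ⟨a, ha, b, hb, rfl⟩ := Finset.mem_add.mp (support_mul _ _ hu)
    have hai : a i = 0 := by
      by_contra hai
      refine mem_support_iff.mp ha (coeff_modMonomial_of_le _ ?_)
      rwa [Finsupp.single_le_iff, Nat.one_le_iff_ne_zero]
    rw [Finsupp.add_apply, hai, zero_add, ← Nat.le_zero]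
    exact degreeOf_le_iff.mp hq.le b hb

lemma mem_span_of_X_mul_mem_span {S : Set (MvPolynomial σ R)} (hS : ∀ q ∈ S, q.degreeOf i = 0)
    (hf : X i * f ∈ Ideal.span S) : f ∈ Ideal.span S := by
  have hdiv : ∀ g ∈ Ideal.span S, ∀ a : MvPolynomial σ R,
      (a * g).divMonomial (Finsupp.single i 1) ∈ Ideal.span S := by
    intro g hg
    induction hg using Submodule.span_induction with
    | mem q hq =>
      intro a
      rw [mul_divMonomial_single_of_degreeOf_eq_zero (hS q hq)]
      exact Ideal.mul_mem_left _ _ (Ideal.subset_span hq)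
    | zero =>
      intro a
      rw [mul_zero, zero_divMonomial]
      exact zero_mem _
    | add g h _ _ hg hh =>
      intro a
      rw [mul_add, add_divMonomial]
      exact add_mem (hg a) (hh a)
    | smul b g _ hg =>
      intro a
      rw [smul_eq_mul, ← mul_assoc]
      exact hg (a * b)
  simpa only [one_mul, X_mul_divMonomial] using hdiv _ hf 1

end VariableFree

section Saturation

lemma exists_pow_mul_mem_span_range {R ι : Type*} [CommSemiring R] {y f : R} {d : ι → ℕ} {q : ι → R}
    (hf : f ∈ Ideal.span (Set.range q)) :
    ∃ N, y ^ N * f ∈ Ideal.span (Set.range fun i ↦ y ^ d i * q i) := by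
  induction hf using Submodule.span_induction with
  | mem _ hq =>
    obtain ⟨i, rfl⟩ := hq
    exact ⟨d i, Ideal.subset_span ⟨i, rfl⟩⟩
  | zero => exact ⟨0, by rw [mul_zero]; exact zero_mem _⟩
  | add g h _ _ hg hh =>
    obtain ⟨M, hM⟩ := hg
    obtain ⟨N, hN⟩ := hh
    refine ⟨M + N, ?_⟩
    have hsplit : y ^ (M + N) * (g + h) = y ^ N * (y ^ M * g) + y ^ M * (y ^ N * h) := by ring
    rw [hsplit]
    exact add_mem (Ideal.mul_mem_left _ _ hM) (Ideal.mul_mem_left _ _ hN)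
  | smul a g _ hg =>
    obtain ⟨N, hN⟩ := hg
    exact ⟨N, by rw [smul_eq_mul, mul_left_comm]; exact Ideal.mul_mem_left _ _ hN⟩

lemma span_image_sup_span_singleton_eq {R ι : Type*} [CommSemiring R] (y : R) (d : ι → ℕ)
    (q : ι → R) :
    Ideal.span (q '' {i | d i = 0}) ⊔ Ideal.span {y} =
      Ideal.span (Set.range fun i ↦ y ^ d i * q i) ⊔ Ideal.span {y} := by
  refine le_antisymm (sup_le_sup_right (Ideal.span_mono ?_) _)
    (sup_le (Ideal.span_le.mpr ?_) le_sup_right)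
  · rintro _ ⟨i, hi, rfl⟩
    exact ⟨i, by simp only [show d i = 0 from hi, pow_zero, one_mul]⟩
  · rintro _ ⟨i, rfl⟩
    rcases eq_or_ne (d i) 0 with hi | hi
    · exact Ideal.mem_sup_left (Ideal.subset_span ⟨i, hi, by simp only [hi, pow_zero, one_mul]⟩)
    · exact Ideal.mem_sup_right (Ideal.mul_mem_right _ _
        (Ideal.pow_mem_of_mem _ (Ideal.mem_span_singleton_self y) _ hi.pos))

variable {R σ : Type*} [CommSemiring R] {C J : Ideal (MvPolynomial σ R)} {l : MvPolynomial σ R}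

attribute [local instance] gradedAlgebra

lemma isHomogeneous_of_exists_pow_mul_mem (hJ : J.IsHomogeneous (homogeneousSubmodule σ R))
    (hJC : J ≤ C) (hl : l.IsHomogeneous 1) (hreg : ∀ f, l * f ∈ C → f ∈ C)
    (hsat : ∀ f ∈ C, ∃ N, l ^ N * f ∈ J) : C.IsHomogeneous (homogeneousSubmodule σ R) := by
  have hpow (N : ℕ) : ∀ f, l ^ N * f ∈ C → f ∈ C := by
    induction N with
    | zero => exact fun f hf ↦ by rwa [pow_zero, one_mul] at hf
    | succ N ih => exact fun f hf ↦ hreg f (ih _ (by rwa [pow_succ, mul_assoc] at hf))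
  refine isHomogeneous_iff_forall_homogeneousComponent_mem.mpr fun f hf e ↦ ?_
  obtain ⟨N, hN⟩ := hsat f hf
  refine hpow N _ (hJC ?_)
  rw [← homogeneousComponent_mul (hl.pow N)]
  exact homogeneousComponent_mem_of_mem hJ hN _

end Saturation

section LinearFormMul

variable {k σ : Type*} [Field k] {C : Ideal (MvPolynomial σ k)} {l : MvPolynomial σ k}

attribute [local instance] gradedAlgebra

lemma degreePart_inf_span_singleton_zero (hl : l.IsHomogeneous 1) :
    degreePart (C ⊓ Ideal.span {l}) 0 = ⊥ := by
  refine (Submodule.eq_bot_iff _).mpr fun f ⟨⟨_, hfl⟩, hf⟩ ↦ ?_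
  obtain ⟨g, rfl⟩ := Ideal.mem_span_singleton.mp hfl
  have hl₀ : constantCoeff l = 0 := by
    by_contra h
    simpa using hl h
  have hcomp : homogeneousComponent 0 (l * g) = l * g := by
    rw [homogeneousComponent_of_mem hf, if_pos rfl]
  rw [← hcomp, homogeneousComponent_zero, ← constantCoeff_eq, map_mul, hl₀, zero_mul, C_0]

lemma degreePart_inf_span_singleton_succ (hC : C.IsHomogeneous (homogeneousSubmodule σ k))
    (hl : l.IsHomogeneous 1) (hreg : ∀ f, l * f ∈ C → f ∈ C) (e : ℕ) :
    degreePart (C ⊓ Ideal.span {l}) (e + 1) =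
      (degreePart C e).map (LinearMap.mulLeft k l) := by
  refine le_antisymm ?_ ?_
  · rintro f ⟨⟨hfC, hfl⟩, hf⟩
    obtain ⟨g, rfl⟩ := Ideal.mem_span_singleton.mp hfl
    refine ⟨homogeneousComponent e g, ⟨homogeneousComponent_mem_of_mem hC (hreg g hfC) e,
      homogeneousComponent_mem e g⟩, ?_⟩
    rw [LinearMap.mulLeft_apply, ← homogeneousComponent_mul hl, add_comm 1 e,
      homogeneousComponent_of_mem hf, if_pos rfl]
  · rintro _ ⟨g, ⟨hgC, hg⟩, rfl⟩
    exact ⟨⟨C.mul_mem_left _ hgC, Ideal.mem_span_singleton.mpr ⟨g, rfl⟩⟩,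
      add_comm 1 e ▸ hl.mul hg⟩

lemma finrank_degreePart_inf_span_singleton_succ
    (hC : C.IsHomogeneous (homogeneousSubmodule σ k)) (hl : l.IsHomogeneous 1) (hl₀ : l ≠ 0)
    (hreg : ∀ f, l * f ∈ C → f ∈ C) (e : ℕ) :
    Module.finrank k (degreePart (C ⊓ Ideal.span {l}) (e + 1)) =
      Module.finrank k (degreePart C e) := by
  rw [degreePart_inf_span_singleton_succ hC hl hreg]
  exact (Submodule.equivMapOfInjective _ (mul_right_injective₀ hl₀) _).finrank_eq.symm

end LinearFormMul

section HilbertFunction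

variable {k : Type*} [Field k] {n : ℕ} {I J K L C : Ideal (MvPolynomial (Fin (n + 1)) k)}
  {l : MvPolynomial (Fin (n + 1)) k} {e : ℕ}

lemma hilb_add_finrank_degreePart (I : Ideal (MvPolynomial (Fin (n + 1)) k)) (e : ℕ) :
    hilb I e + Module.finrank k (degreePart I e) =
      Module.finrank k (homogeneousSubmodule (Fin (n + 1)) k e) := by
  have hker : LinearMap.ker (Ideal.Quotient.mkₐ k I).toLinearMap = I.restrictScalars k := by
    ext f
    exact Ideal.Quotient.eq_zero_iff_mem
  rw [hilb, degreePart, inf_comm, ← hker, finrank_map_add_finrank_inf_ker]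

lemma hilb_le_hilb_of_le (hJK : J ≤ K) (e : ℕ) : hilb K e ≤ hilb J e := by
  have hle : Module.finrank k (degreePart J e) ≤ Module.finrank k (degreePart K e) :=
    Submodule.finrank_mono (degreePart_mono hJK)
  have hJ := hilb_add_finrank_degreePart J e
  have hK := hilb_add_finrank_degreePart K e
  omega

attribute [local instance] gradedAlgebra

lemma eq_of_le_of_hilb_eq (hK : K.IsHomogeneous (homogeneousSubmodule (Fin (n + 1)) k))
    (hJK : J ≤ K) (h : ∀ e, hilb J e = hilb K e) : J = K := by
  have hdegree (e : ℕ) : degreePart J e = degreePart K e := by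
    refine Submodule.eq_of_le_of_finrank_eq (degreePart_mono hJK) ?_
    have hJe := hilb_add_finrank_degreePart J e
    have hKe := hilb_add_finrank_degreePart K e
    have he := h e
    omega
  refine hJK.antisymm fun f hf ↦ ?_
  rw [← sum_homogeneousComponent f]
  refine sum_mem fun e _ ↦ ?_
  have hmem : homogeneousComponent e f ∈ degreePart K e :=
    ⟨homogeneousComponent_mem_of_mem hK hf e, homogeneousComponent_mem e f⟩
  rw [← hdegree] at hmem
  exact hmem.1

lemma hilb_sup_add_hilb_inf (hI : I.IsHomogeneous (homogeneousSubmodule (Fin (n + 1)) k))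
    (hJ : J.IsHomogeneous (homogeneousSubmodule (Fin (n + 1)) k)) (e : ℕ) :
    hilb (I ⊔ J) e + hilb (I ⊓ J) e = hilb I e + hilb J e := by
  have hdim := Submodule.finrank_sup_add_finrank_inf_eq (degreePart I e) (degreePart J e)
  rw [← degreePart_inf, ← degreePart_sup hI hJ] at hdim
  have hIe := hilb_add_finrank_degreePart I e
  have hJe := hilb_add_finrank_degreePart J e
  have hsup := hilb_add_finrank_degreePart (I ⊔ J) e
  have hinf := hilb_add_finrank_degreePart (I ⊓ J) e
  omega

lemma hilb_initialFormIdeal (w : Fin (n + 1) → ℕ)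
    (hI : I.IsHomogeneous (homogeneousSubmodule (Fin (n + 1)) k)) (e : ℕ) :
    hilb (initialFormIdeal w I) e = hilb I e := by
  have hinit := hilb_add_finrank_degreePart (initialFormIdeal w I) e
  rwa [finrank_degreePart_initialFormIdeal hI, ← hilb_add_finrank_degreePart I,
    Nat.add_right_cancel_iff] at hinit

lemma hilb_inf_span_singleton (hC : C.IsHomogeneous (homogeneousSubmodule (Fin (n + 1)) k))
    (hl : l.IsHomogeneous 1) (hl₀ : l ≠ 0) (hreg : ∀ f, l * f ∈ C → f ∈ C) (e : ℕ) :
    hilb (C ⊓ Ideal.span {l}) e =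
      hilb (Ideal.span {l}) e + if e = 0 then 0 else hilb C (e - 1) := by
  have hCl := hilb_add_finrank_degreePart (C ⊓ Ideal.span {l}) e
  have hspan := hilb_add_finrank_degreePart (⊤ ⊓ Ideal.span {l}) e
  cases e with
  | zero =>
    rw [degreePart_inf_span_singleton_zero hl] at hCl hspan
    rw [top_inf_eq] at hspan
    rw [if_pos rfl]
    omega
  | succ e =>
    have htop : degreePart (⊤ : Ideal (MvPolynomial (Fin (n + 1)) k)) e =
        homogeneousSubmodule (Fin (n + 1)) k e := top_inf_eq _
    have hCe := hilb_add_finrank_degreePart C e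
    rw [finrank_degreePart_inf_span_singleton_succ hC hl hl₀ hreg] at hCl
    rw [finrank_degreePart_inf_span_singleton_succ (Ideal.IsHomogeneous.top _) hl hl₀
      fun _ _ ↦ Submodule.mem_top, htop, top_inf_eq] at hspan
    rw [if_neg e.succ_ne_zero, Nat.add_sub_cancel]
    omega

lemma hilb_inf_sup_add_hilb (hJ : J.IsHomogeneous (homogeneousSubmodule (Fin (n + 1)) k))
    (hC : C.IsHomogeneous (homogeneousSubmodule (Fin (n + 1)) k))
    (hL : L.IsHomogeneous (homogeneousSubmodule (Fin (n + 1)) k)) (hJC : J ≤ C) (e : ℕ) :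
    hilb (C ⊓ (J ⊔ L)) e + hilb L e = hilb (C ⊓ L) e + hilb (J ⊔ L) e := by
  have hsup : C ⊔ (J ⊔ L) = C ⊔ L := by rw [← sup_assoc, sup_eq_left.mpr hJC]
  have hJL := hilb_sup_add_hilb_inf hC (hJ.sup hL) e
  rw [hsup] at hJL
  have hCL := hilb_sup_add_hilb_inf hC hL e
  omega

lemma hilb_inf_sup_span_singleton (hJ : J.IsHomogeneous (homogeneousSubmodule (Fin (n + 1)) k))
    (hC : C.IsHomogeneous (homogeneousSubmodule (Fin (n + 1)) k)) (hJC : J ≤ C)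
    (hl : l.IsHomogeneous 1) (hl₀ : l ≠ 0) (hreg : ∀ f, l * f ∈ C → f ∈ C) (e : ℕ) :
    hilb (C ⊓ (J ⊔ Ideal.span {l})) e =
      hilb (J ⊔ Ideal.span {l}) e + if e = 0 then 0 else hilb C (e - 1) := by
  have hmod := hilb_inf_sup_add_hilb hJ hC (isHomogeneous_span_singleton hl) hJC e
  have hshift := hilb_inf_span_singleton hC hl hl₀ hreg e
  omega

end HilbertFunction

section MainTheorem

variable {k : Type*} [Field k] {n : ℕ}

lemma iny_eq_initialForm (p : MvPolynomial (Fin (n + 1)) k) :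
    iny p = initialForm (Pi.single (Fin.last n) 1) p := by
  have hydeg : weightedTotalDegree (Pi.single (Fin.last n) 1) p = ydeg p := by
    rw [weightedTotalDegree_piSingle, degreeOf_eq_sup, ydeg]
  rw [initialForm, weightedHomogeneousComponent_apply, hydeg, iny]
  simp only [Finsupp.weight_single_one_apply]

lemma ne_zero_of_initialForm_eq_X_pow_mul {σ : Type*} {w : σ → ℕ} {i : σ} {d : ℕ}
    {p q : MvPolynomial σ k} (hp : initialForm w p = X i ^ d * q) (hq : ¬ X i ∣ q) : p ≠ 0 := by
  rintro rfl
  rw [initialForm, map_zero, eq_comm, mul_eq_zero_iff_left (pow_ne_zero _ (X_ne_zero _))] at hp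
  exact hq (hp ▸ dvd_zero _)

attribute [local instance] gradedAlgebra

theorem stmt_3_general {ι : Type*} (I : Ideal (MvPolynomial (Fin (n + 1)) k))
    (hI : ∀ f ∈ I, ∀ e : ℕ, homogeneousComponent e f ∈ I)
    (d : ι → ℕ) (q : ι → MvPolynomial (Fin (n + 1)) k)
    (hspan : initialFormIdeal (Pi.single (Fin.last n) 1) I =
      Ideal.span (Set.range fun i ↦ yv k n ^ d i * q i))
    (hq : ∀ i, (q i).degreeOf (Fin.last n) = 0) :
    (∀ e : ℕ,
      hilb (Ideal.span (q '' {i | d i = 0}) + Ideal.span {yv k n}) e +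
          (if e = 0 then 0 else hilb (Ideal.span (Set.range q)) (e - 1)) ≤
        hilb I e) ∧
    ((∀ e : ℕ,
        hilb I e =
          hilb (Ideal.span (q '' {i | d i = 0}) + Ideal.span {yv k n}) e +
            (if e = 0 then 0 else hilb (Ideal.span (Set.range q)) (e - 1))) ↔
      Ideal.span (Set.range fun i ↦ yv k n ^ d i * q i) =
        Ideal.span (Set.range q) ⊓
          (Ideal.span (q '' {i | d i = 0}) + Ideal.span {yv k n})) := by
  set C := Ideal.span (Set.range q)
  set J := Ideal.span (Set.range fun i ↦ yv k n ^ d i * q i)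
  have hI' := isHomogeneous_iff_forall_homogeneousComponent_mem.mpr hI
  have hJ : J.IsHomogeneous (homogeneousSubmodule _ k) := hspan ▸ isHomogeneous_initialFormIdeal hI'
  have hy : (yv k n).IsHomogeneous 1 := isHomogeneous_X _ _
  have hreg : ∀ f, yv k n * f ∈ C → f ∈ C := fun f ↦
    mem_span_of_X_mul_mem_span (Set.forall_mem_range.mpr hq)
  have hJC : J ≤ C := Ideal.span_le.mpr <| Set.range_subset_iff.mpr fun i ↦
    C.mul_mem_left _ (Ideal.subset_span (Set.mem_range_self i))
  have hC : C.IsHomogeneous (homogeneousSubmodule _ k) :=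
    isHomogeneous_of_exists_pow_mul_mem hJ hJC hy hreg fun _ ↦ exists_pow_mul_mem_span_range
  have hP : Ideal.span (q '' {i | d i = 0}) ⊔ Ideal.span {yv k n} = J ⊔ Ideal.span {yv k n} :=
    span_image_sup_span_singleton_eq (yv k n) d q
  have hJCP : J ≤ C ⊓ (J ⊔ Ideal.span {yv k n}) := le_inf hJC le_sup_left
  rw [Submodule.add_eq_sup, hP]
  simp only [← hilb_inf_sup_span_singleton hJ hC hJC hy (X_ne_zero _) hreg,
    ← hilb_initialFormIdeal (Pi.single (Fin.last n) 1) hI', hspan]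
  exact ⟨hilb_le_hilb_of_le hJCP,
    eq_of_le_of_hilb_eq (hC.inf (hJ.sup (isHomogeneous_span_singleton hy))) hJCP,
    fun h e ↦ congrArg (hilb · e) h⟩

end MainTheorem

/-- With `{y^{d i} * q i + r i}` a Gröbner basis of a homogeneous ideal `I` as
before, the Hilbert series satisfy `h_{R/I}(s) ≥ h_{R/P}(s) + s·h_{R/C}(s)`
coefficientwise, with equality if and only if `I' = C ∩ P`. -/
theorem stmt_3 {k : Type*} [Field k] {n m : ℕ}
    (ord : TermOrder (Fin (n + 1)))
    (hord : ∀ p : MvPolynomial (Fin (n + 1)) k, lm ord p = lm ord (iny p))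
    (I : Ideal (MvPolynomial (Fin (n + 1)) k))
    (hI : ∀ f ∈ I, ∀ e : ℕ, MvPolynomial.homogeneousComponent e f ∈ I)
    (d : Fin m → ℕ) (q r : Fin m → MvPolynomial (Fin (n + 1)) k)
    (hGB : IsGB ord I (fun i => yv k n ^ d i * q i + r i))
    (hiny : ∀ i, iny (yv k n ^ d i * q i + r i) = yv k n ^ d i * q i)
    (hq : ∀ i, ¬ yv k n ∣ q i) :
    (∀ e : ℕ,
      hilb (Ideal.span (q '' {i | d i = 0}) + Ideal.span {yv k n}) e +
          (if e = 0 then 0 else hilb (Ideal.span (Set.range q)) (e - 1)) ≤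
        hilb I e) ∧
    ((∀ e : ℕ,
        hilb I e =
          hilb (Ideal.span (q '' {i | d i = 0}) + Ideal.span {yv k n}) e +
            (if e = 0 then 0 else hilb (Ideal.span (Set.range q)) (e - 1))) ↔
      Ideal.span (Set.range fun i => yv k n ^ d i * q i) =
        Ideal.span (Set.range q) ⊓
          (Ideal.span (q '' {i | d i = 0}) + Ideal.span {yv k n})) := by
  simp only [iny_eq_initialForm] at hord hiny
  refine stmt_3_general I hI d q ?_ fun i ↦ ?_
  · simp only [hGB.initialFormIdeal_eq_span_range hord fun i ↦
      ne_zero_of_initialForm_eq_X_pow_mul (hiny i) (hq i), hiny]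
  · exact degreeOf_eq_zero_of_isWeightedHomogeneous_X_pow_mul
      (hiny i ▸ isWeightedHomogeneous_initialForm _) (hq i)
end
end

section
/- Let π ∈ S_n be vexillary with largest descent position k. Then the Grassmannian permutation π̃ (the unique Grassmannian permutation with descent at k obtained by the chain construction) satisfies Ess(π̃) = {(k, k − p + q) : (p,q) ∈ Ess(π)} and r_{π̃}(k, k − p + q) = k − p + r_π(p,q) for each (p,q) ∈ Ess(π). -/
open Equiv Finset

/-- `(p,q)` (0-indexed) is a box of the diagram `D(π)`:
`π(p) > q` and `π⁻¹(q) > p`. -/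
def InDiag {n : ℕ} (π : Equiv.Perm (Fin n)) (p q : ℕ) : Prop :=
  ∃ (hp : p < n) (hq : q < n),
    q < (π ⟨p, hp⟩ : ℕ) ∧ p < (π.symm ⟨q, hq⟩ : ℕ)

/-- `(p,q)` is in the essential set `Ess(π)`: a southeast corner of `D(π)`. -/
def InEss {n : ℕ} (π : Equiv.Perm (Fin n)) (p q : ℕ) : Prop :=
  InDiag π p q ∧ ¬ InDiag π (p + 1) q ∧ ¬ InDiag π p (q + 1)

/-- The rank function `r(p,q) = #{i ≤ p : π(i) ≤ q}` (0-indexed). -/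
def rk {n : ℕ} (π : Equiv.Perm (Fin n)) (p q : ℕ) : ℕ :=
  (Finset.univ.filter (fun i : Fin n => (i : ℕ) ≤ p ∧ (π i : ℕ) ≤ q)).card

/-- The dots of `π` strictly northwest of `(i,j)` form a diagonal: any two of them
are ordered strictly northwest-to-southeast. -/
def Diagonalizes {n : ℕ} (π : Equiv.Perm (Fin n)) (i j : ℕ) : Prop :=
  ∀ a b : Fin n, (a : ℕ) < i → (π a : ℕ) < j → (b : ℕ) < i → (π b : ℕ) < j →
    a < b → π a < π b

/-- `π` is vexillary, i.e. 2143-avoiding. -/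
def Vexillary {n : ℕ} (π : Equiv.Perm (Fin n)) : Prop :=
  ¬ ∃ a b c d : Fin n, a < b ∧ b < c ∧ c < d ∧
    π b < π a ∧ π a < π d ∧ π d < π c

/-- `(p,q) ∈ D(π)` is accessible: `r(p,q) ≠ 0` and no box of `D(π)` other than
`(p,q)` itself lies weakly southeast of `(p,q)`. -/
def Accessible {n : ℕ} (π : Equiv.Perm (Fin n)) (p q : Fin n) : Prop :=
  InDiag π p q ∧ rk π p q ≠ 0 ∧
    ∀ i j : ℕ, InDiag π i j → (p : ℕ) ≤ i → (q : ℕ) ≤ j → i = (p : ℕ) ∧ j = (q : ℕ)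

/-- `π` has a descent at (0-indexed) position `m`: `π(m) > π(m+1)`. -/
def Des {n : ℕ} (π : Equiv.Perm (Fin n)) (m : ℕ) : Prop :=
  ∃ h : m + 1 < n, (π ⟨m + 1, h⟩ : ℕ) < (π ⟨m, Nat.lt_of_succ_lt h⟩ : ℕ)

/-!
Let an essential box `(p, q)` of `π` have `u` dots to its northeast and `v` dots to its southwest,
so that `u, v > 0`, `r(p, q) + u = p + 1` and `r(p, q) + v = q + 1`. If `π` is vexillary, no
essential box lies strictly northwest of another, so `u` and `v` vary strictly in opposite
directions: the pairs `(u, v)` are the corners of a partition, with at most `k + 1` parts because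
every `p` is at most `k`. The Grassmannian permutation of that partition has one essential box for
each corner, in row `k` and in the column `j` with `j + u = k + v`, and its rank there is
`k + 1 - u`. Eliminating `u` and `v` gives the asserted column and rank.
-/

section EssentialSet

variable {n : ℕ} {π : Perm (Fin n)} {p q p' q' : ℕ}

lemma inDiag_symm_iff : InDiag π.symm q p ↔ InDiag π p q :=
  ⟨fun ⟨hq, hp, h₁, h₂⟩ => ⟨hp, hq, h₂, h₁⟩, fun ⟨hp, hq, h₁, h₂⟩ => ⟨hq, hp, h₂, h₁⟩⟩

lemma InEss.symm (h : InEss π p q) : InEss π.symm q p := by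
  simpa only [InEss, inDiag_symm_iff, and_comm] using h

lemma InDiag.not_inDiag_succ_iff (h : InDiag π p q) :
    ¬ InDiag π (p + 1) q ↔ ∃ hp : p + 1 < n, (π ⟨p + 1, hp⟩ : ℕ) ≤ q := by
  obtain ⟨-, hq, -, hpq⟩ := h
  have hp : p + 1 < n := by omega
  have hne : q < (π ⟨p + 1, hp⟩ : ℕ) → (π.symm ⟨q, hq⟩ : ℕ) ≠ p + 1 := by
    intro hlt heq
    have : π ⟨p + 1, hp⟩ = ⟨q, hq⟩ := by rw [← π.eq_symm_apply]; exact Fin.ext heq.symm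
    simp [this] at hlt
  constructor
  · intro hnot
    refine ⟨hp, not_lt.1 fun hlt => hnot ⟨hp, hq, hlt, ?_⟩⟩
    have := hne hlt
    omega
  · rintro ⟨_, hle⟩ ⟨_, _, hlt, _⟩
    omega

lemma inEss_iff_apply : InEss π p q ↔ ∃ (hp : p + 1 < n) (hq : q + 1 < n),
    q < (π ⟨p, by omega⟩ : ℕ) ∧ (π ⟨p + 1, hp⟩ : ℕ) ≤ q ∧
      p < (π.symm ⟨q, by omega⟩ : ℕ) ∧ (π.symm ⟨q + 1, hq⟩ : ℕ) ≤ p := by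
  have corner (h : InDiag π p q) : InEss π p q ↔
      (∃ hp : p + 1 < n, (π ⟨p + 1, hp⟩ : ℕ) ≤ q) ∧
        ∃ hq : q + 1 < n, (π.symm ⟨q + 1, hq⟩ : ℕ) ≤ p := by
    rw [← h.not_inDiag_succ_iff, ← (inDiag_symm_iff.2 h).not_inDiag_succ_iff, inDiag_symm_iff]
    exact and_iff_right h
  constructor
  · intro h
    obtain ⟨⟨hp, hrow⟩, hq, hcol⟩ := (corner h.1).1 h
    obtain ⟨_, _, h₁, h₂⟩ := h.1
    exact ⟨hp, hq, h₁, hrow, h₂, hcol⟩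
  · rintro ⟨hp, hq, h₁, hrow, h₂, hcol⟩
    exact (corner ⟨_, _, h₁, h₂⟩).2 ⟨⟨hp, hrow⟩, hq, hcol⟩

lemma des_iff_exists_inEss : Des π p ↔ ∃ q, InEss π p q := by
  classical
  constructor
  · rintro ⟨hp, hdes⟩
    have hbox : InDiag π p (π ⟨p + 1, hp⟩) := ⟨by omega, Fin.isLt _, hdes, by simp⟩
    have hbound {q} (h : InDiag π p q) : q ≤ n := h.2.1.le
    have hle {q} (h : InDiag π p q) : q ≤ Nat.findGreatest (InDiag π p) n :=
      Nat.le_findGreatest (hbound h) h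
    have hlast := Nat.findGreatest_spec (hbound hbox) hbox
    exact ⟨_, hlast, hlast.not_inDiag_succ_iff.2 ⟨hp, hle hbox⟩, fun h => (hle h).not_gt (by omega)⟩
  · rintro ⟨q, h⟩
    obtain ⟨hp, -, hlt, hle, -⟩ := inEss_iff_apply.1 h
    exact ⟨hp, hle.trans_lt hlt⟩

lemma Vexillary.le_of_lt (hπ : Vexillary π) (h : InEss π p q) (h' : InEss π p' q')
    (hpp : p < p') : q' ≤ q := by
  by_contra! hqq
  obtain ⟨hp, hq, -, h₂, -, h₄⟩ := inEss_iff_apply.1 h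
  obtain ⟨hp', hq', h₁', h₂', h₃', h₄'⟩ := inEss_iff_apply.1 h'
  have hp_ne : p + 1 ≠ p' := by rintro rfl; omega
  have hq_ne : q + 1 ≠ q' := by rintro rfl; omega
  -- The 2143 pattern: the dot in column `q + 1`, those in rows `p + 1` and `p'`, and the one in
  -- column `q'`.
  refine hπ ⟨π.symm ⟨q + 1, hq⟩, ⟨p + 1, hp⟩, ⟨p', by omega⟩, π.symm ⟨q', by omega⟩, ?_⟩
  simp only [Fin.lt_def, apply_symm_apply]
  omega

lemma Vexillary.le_and_le_or (hπ : Vexillary π) (h : InEss π p q) (h' : InEss π p' q') :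
    (p ≤ p' ∧ q' ≤ q) ∨ (p' ≤ p ∧ q ≤ q') := by
  have := hπ.le_of_lt h h'
  have := hπ.le_of_lt h' h
  omega

end EssentialSet

section Rank

/-- The number of dots of `π` northeast of `(p, q)`: in rows `≤ p` and columns `> q`. The number of
dots southwest of `(p, q)` is `rkNE π.symm q p`. -/
def rkNE {n : ℕ} (π : Perm (Fin n)) (p q : ℕ) : ℕ :=
  #{i : Fin n | (i : ℕ) ≤ p ∧ q < (π i : ℕ)}

variable {n : ℕ} {π : Perm (Fin n)} {p q p' q' : ℕ}

lemma rk_symm (π : Perm (Fin n)) (p q : ℕ) : rk π.symm q p = rk π p q :=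
  card_equiv π.symm (by simp [and_comm])

lemma rk_add_rkNE_of_lt (π : Perm (Fin n)) (hp : p < n) (q : ℕ) :
    rk π p q + rkNE π p q = p + 1 := by
  have hrows : (univ.filter fun i : Fin n => (i : ℕ) ≤ p).card = p + 1 := by
    simpa only [Nat.lt_succ_iff, min_eq_right (Nat.succ_le_of_lt hp)] using
      Fin.card_filter_val_lt (n := n) (m := p + 1)
  rw [← hrows, ← card_filter_add_card_filter_not fun i : Fin n => (π i : ℕ) ≤ q]
  simp only [rk, rkNE, filter_filter, not_le]

lemma InEss.rk_add_rkNE (h : InEss π p q) : rk π p q + rkNE π p q = p + 1 :=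
  rk_add_rkNE_of_lt π h.1.1 q

lemma InEss.rk_add_rkNE_symm (h : InEss π p q) : rk π p q + rkNE π.symm q p = q + 1 := by
  rw [← rk_symm, h.symm.rk_add_rkNE]

lemma InEss.rkNE_pos (h : InEss π p q) : 0 < rkNE π p q := by
  obtain ⟨hp, -, hlt, -⟩ := h.1
  exact card_pos.2 ⟨⟨p, hp⟩, by simpa using hlt⟩

lemma InEss.rkNE_lt (h : InEss π p' q') (hp : p ≤ p') (hq : q' ≤ q) (hne : (p, q) ≠ (p', q')) :
    rkNE π p q < rkNE π p' q' := by
  obtain ⟨hp', hq', hrow, -, -, hcol⟩ := inEss_iff_apply.1 h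
  have hsub : ({i : Fin n | (i : ℕ) ≤ p ∧ q < (π i : ℕ)} : Finset (Fin n)) ⊆
      ({i : Fin n | (i : ℕ) ≤ p' ∧ q' < (π i : ℕ)} : Finset (Fin n)) :=
    monotone_filter_right _ fun i _ ⟨hi, hi'⟩ => ⟨hi.trans hp, hq.trans_lt hi'⟩
  refine card_lt_card ((ssubset_iff_of_subset hsub).2 ?_)
  rcases hp.lt_or_eq with hlt | rfl
  · exact ⟨⟨p', by omega⟩, by simpa using hrow, by simp [hlt]⟩
  · have hlt : q' < q := hq.lt_of_ne fun h => hne (by rw [h])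
    exact ⟨π.symm ⟨q' + 1, hq'⟩, by simpa using hcol, by simpa using fun _ => hlt⟩

lemma Vexillary.rkNE_lt_iff (hπ : Vexillary π) (h : InEss π p q) (h' : InEss π p' q') :
    rkNE π p q < rkNE π p' q' ↔ rkNE π.symm q' p' < rkNE π.symm q p := by
  by_cases heq : (p, q) = (p', q')
  · obtain ⟨rfl, rfl⟩ := Prod.mk.inj heq
    simp only [lt_irrefl]
  have hne : (q, p) ≠ (q', p') := fun h => heq (congrArg Prod.swap h)
  rcases hπ.le_and_le_or h h' with ⟨hp, hq⟩ | ⟨hp, hq⟩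
  · exact iff_of_true (h'.rkNE_lt hp hq heq) (h.symm.rkNE_lt hq hp hne.symm)
  · exact iff_of_false (h.rkNE_lt hp hq (Ne.symm heq)).not_gt (h'.symm.rkNE_lt hq hp hne).not_gt

end Rank

section Grassmannian

/-- `w` is increasing on the positions `≤ k` and on the positions `> k`: it is the identity or
Grassmannian with descent at `k`. -/
structure IsGrassmannianAt {n : ℕ} (w : Perm (Fin n)) (k : ℕ) : Prop where
  strictMonoOn_le : StrictMonoOn w {i | (i : ℕ) ≤ k}
  strictMonoOn_gt : StrictMonoOn w {i | k < (i : ℕ)}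

lemma IsGrassmannianAt.eq_of_des {n k m : ℕ} {w : Perm (Fin n)} (hw : IsGrassmannianAt w k)
    (hm : Des w m) : m = k := by
  obtain ⟨h, hdes⟩ := hm
  have hlt : (⟨m, by omega⟩ : Fin n) < ⟨m + 1, h⟩ := Nat.lt_succ_self m
  by_contra hne
  rcases lt_or_gt_of_ne hne with hmk | hmk
  · exact hdes.not_gt (hw.strictMonoOn_le hmk.le hmk hlt)
  · exact hdes.not_gt (hw.strictMonoOn_gt hmk (Nat.lt_succ_of_lt hmk) hlt)

lemma IsGrassmannianAt.inEss_iff {n k i j : ℕ} {w : Perm (Fin n)} (hw : IsGrassmannianAt w k) :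
    InEss w i j ↔ i = k ∧ ∃ hj : j + 1 < n,
      k < (w.symm ⟨j, by omega⟩ : ℕ) ∧ (w.symm ⟨j + 1, hj⟩ : ℕ) ≤ k := by
  constructor
  · intro h
    obtain rfl := hw.eq_of_des (des_iff_exists_inEss.2 ⟨j, h⟩)
    obtain ⟨-, hj, -, -, hgt, hle⟩ := inEss_iff_apply.1 h
    exact ⟨rfl, hj, hgt, hle⟩
  · rintro ⟨rfl, hj, hgt, hle⟩
    have hi : i + 1 < n := by omega
    have hlast : w (w.symm ⟨j + 1, hj⟩) ≤ w ⟨i, by omega⟩ :=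
      hw.strictMonoOn_le.monotoneOn hle (le_refl i) hle
    have hfirst : w ⟨i + 1, hi⟩ ≤ w (w.symm ⟨j, by omega⟩) :=
      hw.strictMonoOn_gt.monotoneOn (Nat.lt_succ_self i) hgt hgt
    rw [apply_symm_apply] at hlast hfirst
    exact inEss_iff_apply.2 ⟨hi, hj, hlast, hfirst, hgt, hle⟩

/-- The permutation whose first `m` values are those of `x` and whose remaining values are
increasing. -/
def grassmannianPerm {m M : ℕ} (x : Fin m ↪o Fin (m + M)) : Perm (Fin (m + M)) :=
  finSumFinEquiv.symm.trans <|
    finSumEquivOfFinset (s := univ.map x.toEmbedding) (by simp) (by simp [card_compl])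

variable {m k M : ℕ}

lemma grassmannianPerm_castAdd (x : Fin m ↪o Fin (m + M)) (a : Fin m) :
    grassmannianPerm x (Fin.castAdd M a) = x a := by
  simp only [grassmannianPerm, trans_apply, finSumFinEquiv_symm_apply_castAdd,
    finSumEquivOfFinset_inl]
  rw [← orderEmbOfFin_unique' (f := x) _ fun a => by simp]

lemma strictMono_grassmannianPerm_natAdd (x : Fin m ↪o Fin (m + M)) :
    StrictMono fun b : Fin M => grassmannianPerm x (Fin.natAdd m b) := by
  simp only [grassmannianPerm, trans_apply, finSumFinEquiv_symm_apply_natAdd,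
    finSumEquivOfFinset_inr]
  exact OrderEmbedding.strictMono _

lemma isGrassmannianAt_grassmannianPerm (x : Fin (k + 1) ↪o Fin (k + 1 + M)) :
    IsGrassmannianAt (grassmannianPerm x) k where
  strictMonoOn_le i hi j hj hij := by
    have := x.strictMono (a := ⟨i, Nat.lt_succ_of_le hi⟩) (b := ⟨j, Nat.lt_succ_of_le hj⟩) hij
    rwa [← grassmannianPerm_castAdd, ← grassmannianPerm_castAdd] at this
  strictMonoOn_gt i hi j hj hij := by
    induction i using Fin.addCases with
    | left a => exact absurd hi (not_lt.2 (Nat.le_of_lt_succ a.isLt))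
    | right a =>
      induction j using Fin.addCases with
      | left b => exact absurd hj (not_lt.2 (Nat.le_of_lt_succ b.isLt))
      | right b => exact strictMono_grassmannianPerm_natAdd x (by simpa using hij)

lemma grassmannianPerm_symm_le_iff (x : Fin (k + 1) ↪o Fin (k + 1 + M)) (y : Fin (k + 1 + M)) :
    ((grassmannianPerm x).symm y : ℕ) ≤ k ↔ y ∈ Set.range x := by
  constructor
  · intro h
    refine ⟨⟨_, Nat.lt_succ_of_le h⟩, ?_⟩
    rw [← grassmannianPerm_castAdd]
    exact apply_symm_apply _ _
  · rintro ⟨a, rfl⟩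
    rw [← grassmannianPerm_castAdd, symm_apply_apply]
    exact Nat.le_of_lt_succ a.isLt

lemma inEss_grassmannianPerm_iff (x : Fin (k + 1) ↪o Fin (k + 1 + M)) {i j : ℕ} :
    InEss (grassmannianPerm x) i j ↔ i = k ∧
      j + 1 ∈ Set.range (fun a => (x a : ℕ)) ∧ j ∉ Set.range (fun a => (x a : ℕ)) := by
  have mem_range_iff (y : Fin (k + 1 + M)) :
      y ∈ Set.range x ↔ (y : ℕ) ∈ Set.range (fun a => (x a : ℕ)) := by
    simp only [Set.mem_range, Fin.ext_iff]
  simp only [(isGrassmannianAt_grassmannianPerm x).inEss_iff, ← not_le,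
    grassmannianPerm_symm_le_iff, mem_range_iff]
  refine and_congr_right fun _ => ⟨fun ⟨_, hj, hj'⟩ => ⟨hj', hj⟩, fun ⟨hj, hj'⟩ => ⟨?_, hj', hj⟩⟩
  obtain ⟨a, ha⟩ := hj
  exact not_le.2 (ha ▸ (x a).isLt)

lemma rk_grassmannianPerm (x : Fin (k + 1) ↪o Fin (k + 1 + M)) (j : ℕ) :
    rk (grassmannianPerm x) k j = #{a | (x a : ℕ) ≤ j} := by
  symm
  rw [rk, ← card_map (Fin.castAddEmb M)]
  congr 1
  ext i
  induction i using Fin.addCases with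
  | left a => simp [grassmannianPerm_castAdd, Nat.le_of_lt_succ a.isLt]
  | right b =>
    have hgt : ¬ k + 1 + (b : ℕ) ≤ k := by omega
    have hne (a : Fin (k + 1)) : Fin.castAdd M a ≠ Fin.natAdd (k + 1) b :=
      Fin.ne_of_lt (by simp only [Fin.lt_def, Fin.val_castAdd, Fin.val_natAdd]; omega)
    simp [hgt, hne]

end Grassmannian

section Partition

/-- `E` is the set of corners `(u, v)` of a Young diagram with at most `k + 1` rows: the
diagram is the union of the rectangles with `u` rows and `v` columns, none of which contains
another. -/
structure IsCornerSet (k : ℕ) (E : Finset (ℕ × ℕ)) : Prop where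
  fst_pos : ∀ e ∈ E, 0 < e.1
  fst_le : ∀ e ∈ E, e.1 ≤ k + 1
  snd_pos : ∀ e ∈ E, 0 < e.2
  lt_iff : ∀ e ∈ E, ∀ f ∈ E, e.1 < f.1 ↔ f.2 < e.2

/-- The parts of the partition with corner set `E`, padded to length `k + 1` and listed in
increasing order: `part k E a` is the length of row `k - a` of the Young diagram. -/
def part (k : ℕ) (E : Finset (ℕ × ℕ)) (a : ℕ) : ℕ :=
  (E.filter fun e => k < a + e.1).sup Prod.snd

variable {k M : ℕ} {E : Finset (ℕ × ℕ)} {e : ℕ × ℕ}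

lemma part_mono (k : ℕ) (E : Finset (ℕ × ℕ)) : Monotone (part k E) := fun _ _ h =>
  sup_mono <| monotone_filter_right _ fun _ _ he => he.trans_le (Nat.add_le_add_right h _)

lemma le_part {a : ℕ} (he : e ∈ E) (ha : k < a + e.1) : e.2 ≤ part k E a :=
  le_sup (f := Prod.snd) (mem_filter.2 ⟨he, ha⟩)

lemma part_le (hM : ∀ e ∈ E, e.2 ≤ M) (a : ℕ) : part k E a ≤ M :=
  Finset.sup_le fun e he => hM e (mem_filter.1 he).1

lemma strictMono_add_part (k : ℕ) (E : Finset (ℕ × ℕ)) : StrictMono fun a => a + part k E a :=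
  strictMono_id.add_monotone (part_mono k E)

lemma IsCornerSet.part_eq (hE : IsCornerSet k E) (he : e ∈ E) {a : ℕ} (ha : a + e.1 = k + 1) :
    part k E a = e.2 := by
  refine le_antisymm (Finset.sup_le fun f hf => ?_) (le_part he (by omega))
  obtain ⟨hf, hfa⟩ := mem_filter.1 hf
  have := hE.lt_iff f hf e he
  omega

lemma IsCornerSet.part_lt (hE : IsCornerSet k E) (he : e ∈ E) {a : ℕ} (ha : a + e.1 ≤ k) :
    part k E a < e.2 := by
  refine (Finset.sup_lt_iff (hE.snd_pos e he)).2 fun f hf => ?_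
  obtain ⟨hf, hfa⟩ := mem_filter.1 hf
  exact (hE.lt_iff e he f hf).1 (by omega)

lemma IsCornerSet.add_part_lt_or_gt (hE : IsCornerSet k E) (he : e ∈ E) {j : ℕ}
    (hj : j + e.1 = k + e.2) (a : ℕ) :
    (a + e.1 ≤ k ∧ a + part k E a < j) ∨ (k < a + e.1 ∧ j < a + part k E a) := by
  rcases le_or_gt (a + e.1) k with ha | ha
  · have := hE.part_lt he ha
    omega
  · have := le_part he ha
    omega

lemma IsCornerSet.exists_of_part_lt (hE : IsCornerSet k E) {a : ℕ} (hpos : 0 < part k E a)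
    (hjump : ∀ b, b + 1 = a → part k E b < part k E a) : ∃ e ∈ E, a + e.1 = k + 1 := by
  have hne : (E.filter fun e => k < a + e.1).Nonempty := by
    contrapose! hpos
    simp [part, hpos]
  obtain ⟨e, hmem, hsup⟩ := exists_mem_eq_sup _ hne Prod.snd
  obtain ⟨he, hea⟩ := mem_filter.1 hmem
  refine ⟨e, he, ?_⟩
  by_contra hne'
  have hle := hE.fst_le e he
  obtain ⟨b, rfl⟩ : ∃ b, a = b + 1 := ⟨a - 1, by omega⟩
  have hge : part k E (b + 1) ≤ part k E b := hsup.trans_le (le_part he (by omega))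
  exact (hjump b rfl).not_ge hge

lemma IsCornerSet.exists_corner_iff (hE : IsCornerSet k E) (j : ℕ) :
    (∃ e ∈ E, j + e.1 = k + e.2) ↔
      j + 1 ∈ (fun a => a + part k E a) '' Set.Iic k ∧
        j ∉ (fun a => a + part k E a) '' Set.Iic k := by
  constructor
  · rintro ⟨e, he, hj⟩
    have hpos := hE.fst_pos e he
    have hle := hE.fst_le e he
    constructor
    · refine ⟨k + 1 - e.1, Set.mem_Iic.2 (by omega), ?_⟩
      have := hE.part_eq (a := k + 1 - e.1) he (by omega)
      dsimp only; omega
    · rintro ⟨a, -, ha⟩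
      have := hE.add_part_lt_or_gt he hj a
      dsimp only at ha; omega
  · rintro ⟨⟨a, ha, hentry : a + part k E a = j + 1⟩, hj⟩
    have hjump (b : ℕ) (hb : b + 1 = a) : part k E b < part k E a := by
      refine (part_mono k E (by omega)).lt_of_ne fun heq => hj ⟨b, ?_, ?_⟩
      · exact Set.mem_Iic.2 (by have := Set.mem_Iic.1 ha; omega)
      · dsimp only; omega
    have hpos : 0 < part k E a := by
      cases a with
      | zero => omega
      | succ b => exact (Nat.zero_le _).trans_lt (hjump b rfl)
    obtain ⟨e, he, hea⟩ := hE.exists_of_part_lt hpos hjump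
    have := hE.part_eq he hea
    exact ⟨e, he, by omega⟩

/-- The Grassmannian permutation with descent at `k` attached to the partition with corner set `E`:
its value at position `a ≤ k` is `a + part k E a`. -/
def cornerPerm (k : ℕ) (hM : ∀ e ∈ E, e.2 ≤ M) : Perm (Fin (k + 1 + M)) :=
  grassmannianPerm <| OrderEmbedding.ofStrictMono
    (fun a : Fin (k + 1) => ⟨a + part k E a, add_lt_add_of_lt_of_le a.isLt (part_le hM a)⟩)
    fun _ _ h => strictMono_add_part k E h

lemma isGrassmannianAt_cornerPerm (k : ℕ) (hM : ∀ e ∈ E, e.2 ≤ M) :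
    IsGrassmannianAt (cornerPerm k hM) k :=
  isGrassmannianAt_grassmannianPerm _

lemma IsCornerSet.inEss_cornerPerm_iff (hE : IsCornerSet k E) (hM : ∀ e ∈ E, e.2 ≤ M) {i j : ℕ} :
    InEss (cornerPerm k hM) i j ↔ i = k ∧ ∃ e ∈ E, j + e.1 = k + e.2 := by
  have hrange : Set.range (fun a : Fin (k + 1) => (a : ℕ) + part k E a) =
      (fun a => a + part k E a) '' Set.Iic k := by
    ext y
    simp only [Set.mem_range, Fin.exists_iff, Set.mem_image, Set.mem_Iic, Nat.lt_succ_iff,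
      exists_prop]
  rw [hE.exists_corner_iff, ← hrange]
  exact inEss_grassmannianPerm_iff _

lemma IsCornerSet.des_cornerPerm_iff (hE : IsCornerSet k E) (hne : E.Nonempty)
    (hM : ∀ e ∈ E, e.2 ≤ M) {m : ℕ} : Des (cornerPerm k hM) m ↔ m = k := by
  refine ⟨(isGrassmannianAt_cornerPerm k hM).eq_of_des, ?_⟩
  obtain ⟨e, he⟩ := hne
  have hle := hE.fst_le e he
  have hpos := hE.snd_pos e he
  exact fun hm => des_iff_exists_inEss.2
    ⟨k + e.2 - e.1, (hE.inEss_cornerPerm_iff hM).2 ⟨hm, e, he, by omega⟩⟩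

lemma IsCornerSet.rk_cornerPerm (hE : IsCornerSet k E) (hM : ∀ e ∈ E, e.2 ≤ M) (he : e ∈ E) {j : ℕ}
    (hj : j + e.1 = k + e.2) : rk (cornerPerm k hM) k j + e.1 = k + 1 := by
  have hentry (a : ℕ) : a + part k E a ≤ j ↔ a < k + 1 - e.1 := by
    have := hE.add_part_lt_or_gt he hj a
    omega
  have hrk : rk (cornerPerm k hM) k j = #{a : Fin (k + 1) | (a : ℕ) < k + 1 - e.1} := by
    simp only [← hentry]
    exact rk_grassmannianPerm _ j
  have := hE.fst_le e he
  rw [hrk, Fin.card_filter_val_lt]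
  omega

end Partition

section CornersOfVexillary

open Classical in
/-- The pairs (number of dots northeast, number of dots southwest) of the essential boxes of `π`. -/
noncomputable def cornerSet {n : ℕ} (π : Perm (Fin n)) : Finset (ℕ × ℕ) :=
  ((range n ×ˢ range n).filter fun b => InEss π b.1 b.2).image fun b =>
    (rkNE π b.1 b.2, rkNE π.symm b.2 b.1)

variable {n k : ℕ} {π : Perm (Fin n)}

lemma mem_cornerSet_iff {e : ℕ × ℕ} :
    e ∈ cornerSet π ↔ ∃ p q, InEss π p q ∧ (rkNE π p q, rkNE π.symm q p) = e := by
  simp only [cornerSet, mem_image, mem_filter, mem_product, mem_range, Prod.exists]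
  refine exists₂_congr fun p q => and_congr_left fun _ => and_iff_right_of_imp fun h => ?_
  obtain ⟨hp, hq, -⟩ := h.1
  exact ⟨hp, hq⟩

lemma InEss.mem_cornerSet {p q : ℕ} (h : InEss π p q) :
    (rkNE π p q, rkNE π.symm q p) ∈ cornerSet π :=
  mem_cornerSet_iff.2 ⟨p, q, h, rfl⟩

lemma snd_le_of_mem_cornerSet : ∀ e ∈ cornerSet π, e.2 ≤ n := by
  intro e he
  obtain ⟨p, q, h, rfl⟩ := mem_cornerSet_iff.1 he
  obtain ⟨-, hq, -⟩ := h.1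
  have := h.rk_add_rkNE_symm
  dsimp only; omega

lemma Vexillary.isCornerSet (hπ : Vexillary π) (hmax : ∀ m, Des π m → m ≤ k) :
    IsCornerSet k (cornerSet π) where
  fst_pos e he := by
    obtain ⟨p, q, h, rfl⟩ := mem_cornerSet_iff.1 he
    exact h.rkNE_pos
  fst_le e he := by
    obtain ⟨p, q, h, rfl⟩ := mem_cornerSet_iff.1 he
    have := h.rk_add_rkNE
    have := hmax p (des_iff_exists_inEss.2 ⟨q, h⟩)
    dsimp only; omega
  snd_pos e he := by
    obtain ⟨p, q, h, rfl⟩ := mem_cornerSet_iff.1 he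
    exact h.symm.rkNE_pos
  lt_iff e he f hf := by
    obtain ⟨p, q, h, rfl⟩ := mem_cornerSet_iff.1 he
    obtain ⟨p', q', h', rfl⟩ := mem_cornerSet_iff.1 hf
    exact hπ.rkNE_lt_iff h h'

end CornersOfVexillary

theorem stmt_13_general {n : ℕ} (π : Perm (Fin n)) (hvex : Vexillary π) (k : ℕ)
    (hdes : ∃ m, Des π m) (hmax : ∀ m, Des π m → m ≤ k) :
    ∃ N, n ≤ N ∧ ∃ πt : Perm (Fin N),
      (∀ m, Des πt m ↔ m = k) ∧
      (∀ i j, InEss πt i j ↔ i = k ∧ ∃ p q, InEss π p q ∧ j + p = k + q) ∧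
      (∀ p q j, InEss π p q → j + p = k + q → rk πt k j + p = k + rk π p q) := by
  have hE := hvex.isCornerSet hmax
  have hne : (cornerSet π).Nonempty := by
    obtain ⟨m, hm⟩ := hdes
    obtain ⟨q, h⟩ := des_iff_exists_inEss.1 hm
    exact ⟨_, h.mem_cornerSet⟩
  have column_iff {p q : ℕ} (h : InEss π p q) (j : ℕ) :
      j + rkNE π p q = k + rkNE π.symm q p ↔ j + p = k + q := by
    have := h.rk_add_rkNE
    have := h.rk_add_rkNE_symm
    omega
  refine ⟨k + 1 + n, by omega, cornerPerm k snd_le_of_mem_cornerSet,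
    fun m => hE.des_cornerPerm_iff hne _, fun i j => ?_, fun p q j h hj => ?_⟩
  · rw [hE.inEss_cornerPerm_iff]
    refine and_congr_right fun _ => ⟨?_, ?_⟩
    · rintro ⟨e, he, hj⟩
      obtain ⟨p, q, h, rfl⟩ := mem_cornerSet_iff.1 he
      exact ⟨p, q, h, (column_iff h j).1 hj⟩
    · rintro ⟨p, q, h, hj⟩
      exact ⟨_, h.mem_cornerSet, (column_iff h j).2 hj⟩
  · have hrk_corner : rk (cornerPerm k snd_le_of_mem_cornerSet) k j + rkNE π p q = k + 1 :=
      hE.rk_cornerPerm _ h.mem_cornerSet ((column_iff h j).2 hj)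
    have hrk := h.rk_add_rkNE
    omega

/-- For a vexillary `π ∈ S_n` with largest descent position `k`, there is a
Grassmannian permutation `π̃ ∈ S_N` (for some `N ≥ n`) with unique descent at `k`
such that `Ess(π̃) = {(k, k - p + q) : (p,q) ∈ Ess(π)}` and
`r_{π̃}(k, k - p + q) = k - p + r_π(p, q)` for each `(p,q) ∈ Ess(π)`
(all stated additively, avoiding truncated subtraction). -/
theorem stmt_13 {n : ℕ} (π : Equiv.Perm (Fin n)) (hvex : Vexillary π)
    (k : ℕ) (hk : Des π k) (hmax : ∀ m : ℕ, Des π m → m ≤ k) :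
    ∃ N : ℕ, n ≤ N ∧ ∃ πt : Equiv.Perm (Fin N),
      (∀ m : ℕ, Des πt m ↔ m = k) ∧
      (∀ i j : ℕ, InEss πt i j ↔
        (i = k ∧ ∃ p q : ℕ, InEss π p q ∧ j + p = k + q)) ∧
      (∀ p q j : ℕ, InEss π p q → j + p = k + q →
        rk πt k j + p = k + rk π p q) :=
  stmt_13_general π hvex k ⟨k, hk⟩ hmax
end
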